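/- Define r* = 10/(2 + 2√2) = 5(√2 − 1), and for real r set ℛ₁ = √(r² − 44r + 92), ℛ₂ = 7√7 · √( r( r( r(79r − 79ℛ₁ − 2906) + 2(584ℛ₁ + 6733) ) − 24(107ℛ₁ + 1062) ) + 2704ℛ₁ + 23424 ), W₁ = 20(r−1)/(−r + ℛ₁ + 8) − (2/7)(2r + 5), and Z₁ = (1/147)( (980r + √2·ℛ₂ − 980)/(r − ℛ₁ − 8) + 7(94 − 17r) ). Then there exists ε > 0 such that for every r with r* − ε < r < r*: W₁ + Z₁ < 0. -/

import Mathlib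

noncomputable section

/-- The critical self-similarity exponent `r* = 10/(2 + 2√2) = 5(√2 − 1)`. -/
def rstar : ℝ := 10 / (2 + 2 * Real.sqrt 2)

/-- `ℛ₁ = √(r² − 44r + 92)`. -/
def R1 (r : ℝ) : ℝ := Real.sqrt (r ^ 2 - 44 * r + 92)

/-- `ℛ₂`. -/
def R2 (r : ℝ) : ℝ :=
  7 * Real.sqrt 7 * Real.sqrt
    (r * (r * (r * (79 * r - 79 * R1 r - 2906) + 2 * (584 * R1 r + 6733))
        - 24 * (107 * R1 r + 1062)) + 2704 * R1 r + 23424)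

/-- First-order Taylor coefficient `W₁` at the sonic point. -/
def W1 (r : ℝ) : ℝ := 20 * (r - 1) / (-r + R1 r + 8) - (2 / 7) * (2 * r + 5)

/-- First-order Taylor coefficient `Z₁` at the sonic point. -/
def Z1 (r : ℝ) : ℝ :=
  (1 / 147) * ((980 * r + Real.sqrt 2 * R2 r - 980) / (r - R1 r - 8) + 7 * (94 - 17 * r))

/-
Over the common denominator `21 (ℛ₁ + 8 - r)`, the sum `W₁ + Z₁` has a numerator `A - √B` with `A`
and `B` polynomials in `r` and `ℛ₁`. Reducing with `ℛ₁² = r² - 44 r + 92`, the difference `B - A²`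
is `96 (r - 1) (b ℛ₁ - c)` for polynomials `b` and `c` in `r` alone, and a second squaring gives
`(b ℛ₁)² - c² = 19208 (25 - 10 r - r²) (r - 1) (3 r + 1)`. The critical value `r*` is the positive
root of `25 - 10 r - r²`, so all these factors are positive for `1 < r < r*`, where also `b > 0`;
hence `b ℛ₁ > c` and then `√B > A`.
-/

/-- The radicand of the outer square root in `R2`. -/
def R2Radicand (r : ℝ) : ℝ :=
  r * (r * (r * (79 * r - 79 * R1 r - 2906) + 2 * (584 * R1 r + 6733))
    - 24 * (107 * R1 r + 1062)) + 2704 * R1 r + 23424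

/-- The denominator of `W1`, and minus that of `Z1`. -/
def sonicDenom (r : ℝ) : ℝ := R1 r + 8 - r

/-- The part of `21 * sonicDenom r * (W1 r + Z1 r)` that does not involve `R2`. -/
def sonicNumer (r : ℝ) : ℝ := 280 * (r - 1) + sonicDenom r * (64 - 29 * r)

section

variable {r : ℝ}

theorem rstar_eq : rstar = 5 * (√2 - 1) := by
  have hsq : √2 ^ 2 = 2 := Real.sq_sqrt zero_le_two
  rw [rstar, div_eq_iff (by positivity)]
  linear_combination (-10) * hsq

theorem rstar_add_five_sq : (rstar + 5) ^ 2 = 50 := by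
  have hsq : √2 ^ 2 = 2 := Real.sq_sqrt zero_le_two
  rw [rstar_eq]
  linear_combination 25 * hsq

theorem one_lt_rstar : 1 < rstar := by
  have hsqrt : 6 / 5 < √2 := Real.lt_sqrt_of_sq_lt (by norm_num)
  rw [rstar_eq]
  linarith

theorem rstar_lt : rstar < 11 / 5 := by
  have hsqrt : √2 < 36 / 25 := (Real.sqrt_lt' (by norm_num)).mpr (by norm_num)
  rw [rstar_eq]
  linarith

theorem sq_add_ten_mul_lt_of_lt_rstar (hr : -5 ≤ r) (hrstar : r < rstar) :
    r ^ 2 + 10 * r < 25 := by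
  have hsq : (r + 5) ^ 2 < (rstar + 5) ^ 2 :=
    pow_lt_pow_left₀ (by linarith) (by linarith) two_ne_zero
  rw [rstar_add_five_sq] at hsq
  linarith

theorem R1_sq_of_lt_rstar (hrstar : r < rstar) : R1 r ^ 2 = r ^ 2 - 44 * r + 92 := by
  have hr : r < 11 / 5 := hrstar.trans rstar_lt
  have hfactor : 0 < (11 / 5 - r) * (209 / 5 - r) := mul_pos (by linarith) (by linarith)
  exact Real.sq_sqrt (by linarith)

theorem sonicDenom_pos_of_lt_rstar (hrstar : r < rstar) : 0 < sonicDenom r := by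
  have hR1 : 0 ≤ R1 r := Real.sqrt_nonneg _
  have hr : r < 11 / 5 := hrstar.trans rstar_lt
  rw [sonicDenom]
  linarith

theorem sqrt_two_mul_R2 (r : ℝ) : √2 * R2 r = 7 * √(14 * R2Radicand r) := by
  have hsqrt : √14 = √2 * √7 := by
    rw [← Real.sqrt_mul zero_le_two]
    norm_num
  rw [Real.sqrt_mul (by norm_num), hsqrt, R2, R2Radicand]
  ring

theorem W1_add_Z1_eq_div (hD : sonicDenom r ≠ 0) :
    W1 r + Z1 r = (sonicNumer r - √(14 * R2Radicand r)) / (21 * sonicDenom r) := by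
  have hW : -r + R1 r + 8 = sonicDenom r := by rw [sonicDenom]; ring
  have hZ : r - R1 r - 8 = -sonicDenom r := by rw [sonicDenom]; ring
  rw [W1, Z1, sqrt_two_mul_R2, hW, hZ, div_neg, sonicNumer]
  field_simp
  ring

theorem R2Radicand_sub_sonicNumer_sq (hR1 : R1 r ^ 2 = r ^ 2 - 44 * r + 92) :
    14 * R2Radicand r - sonicNumer r ^ 2 =
      96 * (r - 1) *
        ((6 * r ^ 2 + 128 * r - 85) * R1 r - (6 * r ^ 3 - 4 * r ^ 2 + 725 * r - 1070)) := by
  rw [R2Radicand, sonicNumer, sonicDenom]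
  linear_combination -(64 - 29 * r) ^ 2 * hR1

theorem mul_R1_sq_sub_sq (hR1 : R1 r ^ 2 = r ^ 2 - 44 * r + 92) :
    ((6 * r ^ 2 + 128 * r - 85) * R1 r) ^ 2 - (6 * r ^ 3 - 4 * r ^ 2 + 725 * r - 1070) ^ 2 =
      19208 * (25 - (r ^ 2 + 10 * r)) * (r - 1) * (3 * r + 1) := by
  linear_combination (6 * r ^ 2 + 128 * r - 85) ^ 2 * hR1

theorem cubic_lt_mul_R1 (hr : 1 < r) (hrstar : r < rstar) :
    6 * r ^ 3 - 4 * r ^ 2 + 725 * r - 1070 < (6 * r ^ 2 + 128 * r - 85) * R1 r := by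
  have hR1 : 0 ≤ R1 r := Real.sqrt_nonneg _
  have hcoeff : 0 < 6 * r ^ 2 + 128 * r - 85 := by linarith [sq_nonneg r]
  have hcrit : 0 < 25 - (r ^ 2 + 10 * r) :=
    sub_pos.mpr (sq_add_ten_mul_lt_of_lt_rstar (by linarith) hrstar)
  have : 0 < r - 1 := sub_pos.mpr hr
  have hpos : 0 < 19208 * (25 - (r ^ 2 + 10 * r)) * (r - 1) * (3 * r + 1) := by positivity
  rw [← mul_R1_sq_sub_sq (R1_sq_of_lt_rstar hrstar)] at hpos
  exact lt_of_pow_lt_pow_left₀ 2 (by positivity) (sub_pos.mp hpos)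

theorem sonicNumer_lt_sqrt (hr : 1 < r) (hrstar : r < rstar) :
    sonicNumer r < √(14 * R2Radicand r) := by
  have hpos : 0 < 14 * R2Radicand r - sonicNumer r ^ 2 := by
    rw [R2Radicand_sub_sonicNumer_sq (R1_sq_of_lt_rstar hrstar)]
    exact mul_pos (mul_pos (by norm_num) (sub_pos.mpr hr)) (sub_pos.mpr (cubic_lt_mul_R1 hr hrstar))
  exact Real.lt_sqrt_of_sq_lt (sub_pos.mp hpos)

theorem stmt8_general (hr : 1 < r) (hrstar : r < rstar) : W1 r + Z1 r < 0 := by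
  have hD : 0 < sonicDenom r := sonicDenom_pos_of_lt_rstar hrstar
  rw [W1_add_Z1_eq_div hD.ne']
  exact div_neg_of_neg_of_pos (sub_neg.mpr (sonicNumer_lt_sqrt hr hrstar)) (by positivity)

end

/-- for `r` sufficiently close to `r*` from below, `W₁ + Z₁ < 0`. -/
theorem stmt8 : ∃ ε : ℝ, 0 < ε ∧ ∀ r : ℝ, rstar - ε < r → r < rstar → W1 r + Z1 r < 0 := by
  exact ⟨rstar - 1, sub_pos.mpr one_lt_rstar, fun _ hr hrstar ↦
    stmt8_general (by linarith) hrstar⟩
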